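/- Let G = (V, E) be a finite simple graph with distinguished vertices a = v₁ and b = vₙ, n = |V|, and let Net(G) be the associated LDC network. Let (Lₛ, θ, g, d) be a feasible switching solution of Net(G) and suppose that in the subgraph of G formed by the non-switched edge-lines there is a path from a to b of length t (number of edges). Then the flow from g to l on the line ({g,l}, 1, 1/(n+1)) is at most (t+2)/(n+1), and the generation at g satisfies g(g) ≤ 1 + (t+2)/(n+1). -/

import Mathlib

open scoped BigOperators ENNReal Classical

/-- A Linear DC (LDC) power network on the finite bus type `V`.
`adj a b` states that there is a line between buses `a` and `b` (it is meant to be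
symmetric); `cap`/`sus` give the capacity and susceptance of that line; `pmin`/`pmax`
are the minimum/maximum demand, `gmax` is the maximum generation (`⊤` meaning
unbounded) and `cost` is the generation cost. -/
structure LDCNetwork (V : Type*) [Fintype V] where
  adj : V → V → Prop
  cap : V → V → ℝ
  sus : V → V → ℝ
  pmin : V → ℝ
  pmax : V → ℝ≥0∞
  gmax : V → ℝ≥0∞
  cost : V → ℝ

/-- A candidate switching solution: the set of switched-off lines (as a relation on
buses), the phase angles `theta`, the generation `gen` and the served demand `dem`. -/
structure LDCSolution (V : Type*) [Fintype V] where
  switched : V → V → Prop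
  theta : V → ℝ
  gen : V → ℝ
  dem : V → ℝ

/-- Feasibility of a switching solution `S` for the network `N`: switched-off lines are
lines of the network and switching is symmetric; the flow `sus·(θ a - θ b)` of every
non-switched line is within its capacity; the demand and generation bounds hold; and
Kirchhoff's conservation law holds at every bus. -/
def LDCSolution.IsFeasible {V : Type*} [Fintype V] (S : LDCSolution V)
    (N : LDCNetwork V) : Prop :=
  (∀ a b, S.switched a b → N.adj a b) ∧
  (∀ a b, S.switched a b → S.switched b a) ∧
  (∀ a b, N.adj a b → ¬ S.switched a b →
      |N.sus a b * (S.theta a - S.theta b)| ≤ N.cap a b) ∧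
  (∀ v, N.pmin v ≤ S.dem v ∧ 0 ≤ S.dem v ∧ ENNReal.ofReal (S.dem v) ≤ N.pmax v) ∧
  (∀ v, 0 ≤ S.gen v ∧ ENNReal.ofReal (S.gen v) ≤ N.gmax v) ∧
  (∀ v, (∑ b : V, if N.adj v b ∧ ¬ S.switched v b
          then N.sus v b * (S.theta v - S.theta b) else 0) = S.gen v - S.dem v)

/-- Build an LDC network from a one-directional line specification:
`spec p q = some (c, s)` means that there is a line between buses `p` and `q`
with capacity `c` and susceptance `s`. -/
noncomputable def mkNet {V : Type*} [Fintype V] (spec : V → V → Option (ℝ × ℝ))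
    (pmin : V → ℝ) (pmax gmax : V → ℝ≥0∞) (cost : V → ℝ) : LDCNetwork V where
  adj a b := (spec a b).isSome ∨ (spec b a).isSome
  cap a b := ((spec a b).map Prod.fst).getD (((spec b a).map Prod.fst).getD 0)
  sus a b := ((spec a b).map Prod.snd).getD (((spec b a).map Prod.snd).getD 0)
  pmin := pmin
  pmax := pmax
  gmax := gmax
  cost := cost

/-- Buses of the network `Net(G)` associated with a graph `G` on vertex set `V`:
the vertices of `G` together with the generators `g` (`ABus.g`), `g'` (`ABus.gp`) and
the loads `l` (`ABus.l`), `l'` (`ABus.lp`). -/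
inductive ABus (V : Type*) where
  | vert : V → ABus V
  | g : ABus V
  | l : ABus V
  | gp : ABus V
  | lp : ABus V
  deriving DecidableEq, Fintype

/-- The lines of `Net(G)` where `a` and `b` are the distinguished vertices and
`n = |V|`: a line `({u,v}, 1, 1)` for every edge `{u,v}` of `G`, together with
`({g,a}, 1, 1)`, `({b,l}, 1, 1)`, `({g,l}, 1, 1/(n+1))`, `({g',l'}, n, n)`,
`({g',l}, 1, 1)` and `({l',l}, 1, 1)`. -/
noncomputable def graphSpec {V : Type*} [Fintype V] (G : SimpleGraph V) (a b : V) :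
    ABus V → ABus V → Option (ℝ × ℝ) := fun p q =>
  let n : ℝ := Fintype.card V
  match p, q with
  | .vert u, .vert v => if G.Adj u v then some (1, 1) else none
  | .g, .vert v => if v = a then some (1, 1) else none
  | .vert v, .l => if v = b then some (1, 1) else none
  | .g, .l => some (1, 1 / (n + 1))
  | .gp, .lp => some (n, n)
  | .gp, .l => some (1, 1)
  | .lp, .l => some (1, 1)
  | _, _ => none

/-- The network `Net(G)`: `g⁺(g) = g⁺(g') = ⊤`, `p⁺(l) = p⁺(l') = ⊤`, `p⁻(l) = 3`;
all other bounds are `0`. -/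
noncomputable def graphNet {V : Type*} [Fintype V] (G : SimpleGraph V) (a b : V) :
    LDCNetwork (ABus V) :=
  mkNet (graphSpec G a b)
    (fun p => match p with
      | .l => 3
      | _ => 0)
    (fun p => match p with
      | .l => ⊤
      | .lp => ⊤
      | _ => 0)
    (fun p => match p with
      | .g => ⊤
      | .gp => ⊤
      | _ => 0)
    (fun _ => 0)

/-!
Kirchhoff's law summed over a set of buses says that the net flow leaving the set equals its net
generation. Applied to the single buses `l` and `l'`, it shows that the line `{b, l}` carries
positive flow: of the demand `3` at `l`, the line `{g, l}` brings at most `1`, and the lines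
`{g', l}` and `{l', l}` together less than `2`, because both could be saturated only with
`θ(g') = θ(l')`, and then nothing would supply `l'`. Applied to `V`, it shows that `{g, a}` carries
the same positive flow. Hence both lines are in service, and adding the phase drops along
`g, a, …, b, l` gives `θ(g) - θ(l) ≤ t + 2`.
-/

theorem sub_last_le_nsmul {α : Type*} [AddCommGroup α] [PartialOrder α] [IsOrderedAddMonoid α]
    {t : ℕ} {f : Fin (t + 1) → α} {c : α} (hf : ∀ i : Fin t, f i.castSucc - f i.succ ≤ c) :
    f 0 - f (Fin.last t) ≤ t • c := by
  suffices h : ∀ i : Fin (t + 1), f 0 - f i ≤ (i : ℕ) • c from h (Fin.last t)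
  intro i
  induction i using Fin.induction with
  | zero => simp
  | succ i ih =>
    calc f 0 - f i.succ = (f 0 - f i.castSucc) + (f i.castSucc - f i.succ) :=
          (sub_add_sub_cancel _ _ _).symm
      _ ≤ (i : ℕ) • c + c := add_le_add ih (hf i)
      _ = (i.succ : ℕ) • c := by rw [Fin.val_succ, succ_nsmul]

theorem sum_sum_eq_zero_of_antisymm {ι M : Type*} [AddCommGroup M] [IsAddTorsionFree M]
    {f : ι → ι → M} (hf : ∀ i j, f j i = -f i j) (s : Finset ι) :
    ∑ i ∈ s, ∑ j ∈ s, f i j = 0 := by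
  refine self_eq_neg.mp ?_
  calc ∑ i ∈ s, ∑ j ∈ s, f i j = ∑ i ∈ s, ∑ j ∈ s, f j i := Finset.sum_comm
    _ = -∑ i ∈ s, ∑ j ∈ s, f i j := by simp only [← Finset.sum_neg_distrib, ← hf]

/-- The line data of a network, stored as functions of ordered pairs of buses, does not depend on
the orientation of the lines. -/
structure LDCNetwork.IsSymmetric {B : Type*} [Fintype B] (N : LDCNetwork B) : Prop where
  adj_comm : ∀ u v, N.adj u v ↔ N.adj v u
  sus_comm : ∀ u v, N.sus u v = N.sus v u

namespace LDCSolution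

variable {B : Type*} [Fintype B] {S : LDCSolution B} {N : LDCNetwork B} {u v : B}

/-- There is a line between `u` and `v` that is not switched off: exactly these lines carry flow and
are subject to a capacity bound. -/
def IsActive (S : LDCSolution B) (N : LDCNetwork B) (u v : B) : Prop :=
  N.adj u v ∧ ¬ S.switched u v

/-- The flow from `u` to `v`, with value `0` if there is no active line between them, so that
Kirchhoff's law is a sum over all buses. -/
noncomputable def flow (S : LDCSolution B) (N : LDCNetwork B) (u v : B) : ℝ :=
  if S.IsActive N u v then N.sus u v * (S.theta u - S.theta v) else 0

theorem IsActive.flow_eq (h : S.IsActive N u v) :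
    S.flow N u v = N.sus u v * (S.theta u - S.theta v) :=
  if_pos h

theorem flow_eq_zero (h : ¬ S.IsActive N u v) : S.flow N u v = 0 :=
  if_neg h

theorem isActive_of_flow_ne_zero (h : S.flow N u v ≠ 0) : S.IsActive N u v :=
  not_imp_comm.mp flow_eq_zero h

namespace IsFeasible

theorem isActive_comm (hS : S.IsFeasible N) (hN : N.IsSymmetric) :
    S.IsActive N u v ↔ S.IsActive N v u :=
  and_congr (hN.adj_comm u v) (not_congr ⟨hS.2.1 u v, hS.2.1 v u⟩)

theorem flow_swap (hS : S.IsFeasible N) (hN : N.IsSymmetric) (u v : B) :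
    S.flow N v u = -S.flow N u v := by
  unfold flow
  rw [hS.isActive_comm hN, hN.sus_comm v u]
  split_ifs <;> ring

theorem flow_le_cap (hS : S.IsFeasible N) (hcap : 0 ≤ N.cap u v) : S.flow N u v ≤ N.cap u v := by
  by_cases h : S.IsActive N u v
  · rw [h.flow_eq]
    exact (le_abs_self _).trans (hS.2.2.1 u v h.1 h.2)
  · rwa [flow_eq_zero h]

theorem theta_sub_le_div (hS : S.IsFeasible N) (h : S.IsActive N u v) (hsus : 0 < N.sus u v) :
    S.theta u - S.theta v ≤ N.cap u v / N.sus u v := by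
  rw [le_div_iff₀' hsus]
  exact (le_abs_self _).trans (hS.2.2.1 u v h.1 h.2)

theorem pmin_le_dem (hS : S.IsFeasible N) (v : B) : N.pmin v ≤ S.dem v :=
  (hS.2.2.2.1 v).1

theorem dem_nonneg (hS : S.IsFeasible N) (v : B) : 0 ≤ S.dem v :=
  (hS.2.2.2.1 v).2.1

theorem dem_eq_zero (hS : S.IsFeasible N) (hv : N.pmax v = 0) : S.dem v = 0 := by
  have hdem := (hS.2.2.2.1 v).2.2
  rw [hv, nonpos_iff_eq_zero, ENNReal.ofReal_eq_zero] at hdem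
  exact hdem.antisymm (hS.dem_nonneg v)

theorem gen_eq_zero (hS : S.IsFeasible N) (hv : N.gmax v = 0) : S.gen v = 0 := by
  obtain ⟨hnonneg, hgen⟩ := hS.2.2.2.2.1 v
  rw [hv, nonpos_iff_eq_zero, ENNReal.ofReal_eq_zero] at hgen
  exact hgen.antisymm hnonneg

theorem sum_flow (hS : S.IsFeasible N) (v : B) : ∑ w, S.flow N v w = S.gen v - S.dem v := by
  convert hS.2.2.2.2.2 v
  exact if_congr Iff.rfl rfl rfl

theorem sum_flow_compl (hS : S.IsFeasible N) (hN : N.IsSymmetric) (A : Finset B) :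
    ∑ v ∈ A, ∑ w ∈ Aᶜ, S.flow N v w = ∑ v ∈ A, (S.gen v - S.dem v) := by
  calc ∑ v ∈ A, ∑ w ∈ Aᶜ, S.flow N v w
      = ∑ v ∈ A, ∑ w ∈ A, S.flow N v w + ∑ v ∈ A, ∑ w ∈ Aᶜ, S.flow N v w := by
        rw [sum_sum_eq_zero_of_antisymm (hS.flow_swap hN), zero_add]
    _ = ∑ v ∈ A, ∑ w, S.flow N v w := by
        simp only [← Finset.sum_add_distrib, Finset.sum_add_sum_compl]
    _ = ∑ v ∈ A, (S.gen v - S.dem v) := Finset.sum_congr rfl fun v _ => hS.sum_flow v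

theorem sum_flow_of_cut (hS : S.IsFeasible N) (hN : N.IsSymmetric) (A : Finset B)
    (E : Finset (B × B)) (hE : E ⊆ A ×ˢ Aᶜ)
    (hadj : ∀ v ∈ A, ∀ w ∉ A, N.adj v w → (v, w) ∈ E) :
    ∑ e ∈ E, S.flow N e.1 e.2 = ∑ v ∈ A, (S.gen v - S.dem v) := by
  rw [← hS.sum_flow_compl hN, ← Finset.sum_product']
  refine Finset.sum_subset hE fun e he heE => flow_eq_zero fun hactive => heE ?_
  rw [Finset.mem_product, Finset.mem_compl] at he
  exact hadj e.1 he.1 e.2 he.2 hactive.1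

end IsFeasible

end LDCSolution

section GraphNet

open LDCSolution

variable {V : Type*} [Fintype V] {G : SimpleGraph V} {a b : V} {S : LDCSolution (ABus V)}

theorem graphNet_isSymmetric (G : SimpleGraph V) (a b : V) : (graphNet G a b).IsSymmetric where
  adj_comm _ _ := or_comm
  sus_comm u v := by cases u <;> cases v <;> simp [graphNet, mkNet, graphSpec, G.adj_comm]

theorem graphNet_gen_g_eq (hS : S.IsFeasible (graphNet G a b)) :
    S.gen .g = S.flow (graphNet G a b) .g (.vert a) + S.flow (graphNet G a b) .g .l := by
  have hcut := hS.sum_flow_of_cut (graphNet_isSymmetric G a b) {.g}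
    {(.g, .vert a), (.g, .l)} (by simp [Finset.insert_subset_iff])
    (by rintro _ hv w - h; cases w <;> simp_all [graphNet, mkNet, graphSpec])
  rw [Finset.sum_pair (by simp), Finset.sum_singleton, hS.dem_eq_zero rfl, sub_zero] at hcut
  exact hcut.symm

theorem graphNet_dem_l_eq (hS : S.IsFeasible (graphNet G a b)) :
    S.dem .l = S.flow (graphNet G a b) .g .l + S.flow (graphNet G a b) (.vert b) .l +
      (S.flow (graphNet G a b) .gp .l + S.flow (graphNet G a b) .lp .l) := by
  have hN := graphNet_isSymmetric G a b
  have hcut := hS.sum_flow_of_cut hN {.l}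
    {(.l, .g), (.l, .vert b), (.l, .gp), (.l, .lp)} (by simp [Finset.insert_subset_iff])
    (by rintro _ hv w - h; cases w <;> simp_all [graphNet, mkNet, graphSpec])
  simp only [Finset.mem_insert, Finset.mem_singleton, Prod.mk.injEq, reduceCtorEq, and_false,
    or_self, not_false_eq_true, Finset.sum_insert, Finset.sum_singleton, hS.flow_swap hN _ .l,
    hS.gen_eq_zero (v := .l) rfl] at hcut
  linarith

theorem graphNet_flow_lp_gp_add_flow_lp_l (hS : S.IsFeasible (graphNet G a b)) :
    S.flow (graphNet G a b) .lp .gp + S.flow (graphNet G a b) .lp .l = -S.dem .lp := by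
  have hcut := hS.sum_flow_of_cut (graphNet_isSymmetric G a b) {.lp}
    {(.lp, .gp), (.lp, .l)} (by simp [Finset.insert_subset_iff])
    (by rintro _ hv w - h; cases w <;> simp_all [graphNet, mkNet, graphSpec])
  rwa [Finset.sum_pair (by simp), Finset.sum_singleton, hS.gen_eq_zero rfl, zero_sub] at hcut

theorem graphNet_flow_g_a_eq_flow_b_l (hS : S.IsFeasible (graphNet G a b)) :
    S.flow (graphNet G a b) .g (.vert a) = S.flow (graphNet G a b) (.vert b) .l := by
  have hN := graphNet_isSymmetric G a b
  have hadj : ∀ p ∈ Finset.univ.image ABus.vert, ∀ q ∉ Finset.univ.image ABus.vert,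
      (graphNet G a b).adj p q → (p, q) ∈ ({(.vert a, .g), (.vert b, .l)} : Finset _) := by
    intro p hp q hq h
    obtain ⟨v, -, rfl⟩ := Finset.mem_image.mp hp
    cases q <;> simp_all [graphNet, mkNet, graphSpec]
  have hcut := hS.sum_flow_of_cut hN (Finset.univ.image .vert)
    {(.vert a, .g), (.vert b, .l)} (by simp [Finset.insert_subset_iff]) hadj
  have hbalance : ∑ p ∈ Finset.univ.image ABus.vert, (S.gen p - S.dem p) = 0 := by
    refine Finset.sum_eq_zero fun p hp => ?_
    obtain ⟨v, -, rfl⟩ := Finset.mem_image.mp hp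
    rw [hS.gen_eq_zero rfl, hS.dem_eq_zero rfl, sub_zero]
  rw [Finset.sum_pair (by simp), hbalance, hS.flow_swap hN .g (.vert a)] at hcut
  linarith

theorem graphNet_flow_gp_l_add_flow_lp_l_lt_two (hS : S.IsFeasible (graphNet G a b)) :
    S.flow (graphNet G a b) .gp .l + S.flow (graphNet G a b) .lp .l < 2 := by
  have hgp : S.flow (graphNet G a b) .gp .l ≤ 1 := hS.flow_le_cap zero_le_one
  have hlp : S.flow (graphNet G a b) .lp .l ≤ 1 := hS.flow_le_cap zero_le_one
  by_contra! hsaturated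
  have hgp_eq : S.flow (graphNet G a b) .gp .l = 1 := by linarith
  have hlp_eq : S.flow (graphNet G a b) .lp .l = 1 := by linarith
  have hflow : S.flow (graphNet G a b) .lp .gp = 0 := by
    have hgp_theta := (isActive_of_flow_ne_zero (hgp_eq.trans_ne one_ne_zero)).flow_eq
    have hlp_theta := (isActive_of_flow_ne_zero (hlp_eq.trans_ne one_ne_zero)).flow_eq
    rw [hgp_eq, show (graphNet G a b).sus .gp .l = 1 from rfl] at hgp_theta
    rw [hlp_eq, show (graphNet G a b).sus .lp .l = 1 from rfl] at hlp_theta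
    have htheta : S.theta .lp - S.theta .gp = 0 := by linarith
    rw [flow, htheta, mul_zero, ite_self]
  linarith [graphNet_flow_lp_gp_add_flow_lp_l hS, hS.dem_nonneg .lp]

theorem graphNet_flow_b_l_pos (hS : S.IsFeasible (graphNet G a b)) :
    0 < S.flow (graphNet G a b) (.vert b) .l := by
  have hdem : 3 ≤ S.dem .l := hS.pmin_le_dem .l
  have hgl : S.flow (graphNet G a b) .g .l ≤ 1 := hS.flow_le_cap zero_le_one
  linarith [graphNet_dem_l_eq hS, graphNet_flow_gp_l_add_flow_lp_l_lt_two hS]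

theorem graphNet_theta_g_sub_theta_a_le_one (hS : S.IsFeasible (graphNet G a b)) :
    S.theta .g - S.theta (.vert a) ≤ 1 := by
  have hpos := (graphNet_flow_b_l_pos hS).trans_eq (graphNet_flow_g_a_eq_flow_b_l hS).symm
  simpa [graphNet, mkNet, graphSpec] using
    hS.theta_sub_le_div (isActive_of_flow_ne_zero hpos.ne') (by simp [graphNet, mkNet, graphSpec])

theorem graphNet_theta_b_sub_theta_l_le_one (hS : S.IsFeasible (graphNet G a b)) :
    S.theta (.vert b) - S.theta .l ≤ 1 := by
  simpa [graphNet, mkNet, graphSpec] using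
    hS.theta_sub_le_div (isActive_of_flow_ne_zero (graphNet_flow_b_l_pos hS).ne')
      (by simp [graphNet, mkNet, graphSpec])

theorem graphNet_theta_sub_le_one_of_adj (hS : S.IsFeasible (graphNet G a b)) {u v : V}
    (hadj : G.Adj u v) (hon : ¬ S.switched (.vert u) (.vert v)) :
    S.theta (.vert u) - S.theta (.vert v) ≤ 1 := by
  have hactive : S.IsActive (graphNet G a b) (.vert u) (.vert v) :=
    ⟨by simp [graphNet, mkNet, graphSpec, hadj], hon⟩
  simpa [graphNet, mkNet, graphSpec, hadj] using
    hS.theta_sub_le_div hactive (by simp [graphNet, mkNet, graphSpec, hadj])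

theorem graphNet_flow_g_a_le_one (hS : S.IsFeasible (graphNet G a b)) :
    S.flow (graphNet G a b) .g (.vert a) ≤ 1 := by
  have hcap : (graphNet G a b).cap .g (.vert a) = 1 := by simp [graphNet, mkNet, graphSpec]
  exact hcap ▸ hS.flow_le_cap (hcap ▸ zero_le_one)

end GraphNet

/-- If a feasible switching solution of `Net(G)` leaves non-switched
a path `τ` from `a` to `b` in `G` of length `t`, then the flow from `g` to `l` on the
line `({g,l}, 1, 1/(n+1))` is at most `(t+2)/(n+1)` and the generation at `g` is at
most `1 + (t+2)/(n+1)`. -/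
theorem graphNet_gen_g_bound (V : Type*) [Fintype V] (G : SimpleGraph V)
    (a b : V) (hab : a ≠ b)
    (S : LDCSolution (ABus V)) (hS : S.IsFeasible (graphNet G a b))
    (t : ℕ) (τ : Fin (t + 1) → V) (hinj : Function.Injective τ)
    (hfirst : τ 0 = a) (hlast : τ (Fin.last t) = b)
    (hpath : ∀ i : Fin t, G.Adj (τ i.castSucc) (τ i.succ) ∧
      ¬ S.switched (.vert (τ i.castSucc)) (.vert (τ i.succ))) :
    (graphNet G a b).sus .g .l * (S.theta .g - S.theta .l) ≤
        ((t : ℝ) + 2) / ((Fintype.card V : ℝ) + 1) ∧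
    S.gen .g ≤ 1 + ((t : ℝ) + 2) / ((Fintype.card V : ℝ) + 1) := by
  have hpath_drop : S.theta (.vert (τ 0)) - S.theta (.vert (τ (Fin.last t))) ≤ t • (1 : ℝ) :=
    sub_last_le_nsmul (f := fun i => S.theta (.vert (τ i))) fun i =>
      graphNet_theta_sub_le_one_of_adj hS (hpath i).1 (hpath i).2
  rw [hfirst, hlast, nsmul_one] at hpath_drop
  have hdrop : S.theta .g - S.theta .l ≤ t + 2 := by
    linarith [graphNet_theta_g_sub_theta_a_le_one hS, graphNet_theta_b_sub_theta_l_le_one hS]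
  have hline : (graphNet G a b).sus .g .l * (S.theta .g - S.theta .l) ≤
      ((t : ℝ) + 2) / ((Fintype.card V : ℝ) + 1) := by
    rw [show (graphNet G a b).sus .g .l = 1 / ((Fintype.card V : ℝ) + 1) from rfl,
      one_div_mul_eq_div]
    gcongr
  have hflow : S.flow (graphNet G a b) .g .l ≤ ((t : ℝ) + 2) / ((Fintype.card V : ℝ) + 1) := by
    rw [LDCSolution.flow]
    split_ifs
    exacts [hline, by positivity]
  refine ⟨hline, ?_⟩
  rw [graphNet_gen_g_eq hS]
  exact add_le_add (graphNet_flow_g_a_le_one hS) hflow
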